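/- Under Assumptions 1–3, if π′ ∈ Π minimizes the augmented Lagrangian π ↦ L(π, λ, ρ) = −J(π) + (1/(2ρ))‖max{0, λ + ρF(π)}‖² − (1/(2ρ))‖λ‖² over Π for some λ ∈ H₊ and ρ > 0, and λ′ = max{0, λ + ρF(π′)} (pointwise positive part), then π′ also minimizes the standard Lagrangian π ↦ L(π, λ′) = −J(π) + ⟨λ′, F(π)⟩ over Π; consequently d(λ′) = −J(π′) + ⟨λ′, F(π′)⟩. -/

import Mathlib

open MeasureTheory Filter
open scoped RealInnerProductSpace

/-!
On a Hilbert lattice the map `a ↦ ‖a⁺‖² / 2` is monotone and is bounded above by its first-order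
expansion at `a`, with gradient `a⁺`, plus `‖b‖² / 2` for the increment `b`. Along the segment from
a minimizer `x` of the augmented Lagrangian to any competitor `y`, convexity therefore bounds the
increase of the augmented Lagrangian by `t * (L y - L x) + O(t²)`, where `L` is the Lagrangian at
the multiplier `(lam + ρ • F x)⁺`. The increase is nonnegative, so dividing by `t` and letting
`t → 0` gives `L x ≤ L y`.
-/

section NormedLattice

variable {H : Type*} [NormedAddCommGroup H] [Lattice H] [HasSolidNorm H] [IsOrderedAddMonoid H]

theorem norm_le_norm_of_nonneg_of_le {a b : H} (ha : 0 ≤ a) (hab : a ≤ b) : ‖a‖ ≤ ‖b‖ :=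
  norm_le_norm_of_abs_le_abs (by rwa [abs_of_nonneg ha, abs_of_nonneg (ha.trans hab)])

theorem norm_posPart_le_norm_posPart {a b : H} (hab : a ≤ b) : ‖a⁺‖ ≤ ‖b⁺‖ :=
  norm_le_norm_of_nonneg_of_le (posPart_nonneg a) (posPart_mono hab)

theorem norm_posPart_add_le (a b : H) : ‖(a + b)⁺‖ ≤ ‖a⁺ + b‖ := by
  have le_abs : (a + b)⁺ ≤ |a⁺ + b| :=
    sup_le ((add_le_add_left (le_posPart a) b).trans (le_abs_self _)) (abs_nonneg _)
  simpa only [norm_abs_eq_norm] using norm_le_norm_of_nonneg_of_le (posPart_nonneg _) le_abs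

theorem norm_posPart_add_sq_le [InnerProductSpace ℝ H] (a b : H) :
    ‖(a + b)⁺‖ ^ 2 ≤ ‖a⁺‖ ^ 2 + 2 * ⟪a⁺, b⟫ + ‖b‖ ^ 2 := by
  rw [← norm_add_sq_real]
  gcongr
  exact norm_posPart_add_le a b

end NormedLattice

theorem nonneg_of_forall_mem_Ioc_nonneg_add_mul {a b : ℝ}
    (h : ∀ t ∈ Set.Ioc (0 : ℝ) 1, 0 ≤ a + t * b) : 0 ≤ a := by
  have tendsto_a : Tendsto (fun t : ℝ ↦ a + t * b) (nhdsWithin 0 (Set.Ioi 0)) (nhds a) :=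
    Continuous.tendsto' (by fun_prop) 0 a (by simp) |>.mono_left nhdsWithin_le_nhds
  exact ge_of_tendsto tendsto_a (eventually_of_mem (Ioc_mem_nhdsGT one_pos) h)

section Lagrangian

variable {E H : Type*} [NormedAddCommGroup H] [InnerProductSpace ℝ H]

/-- The Lagrangian of the problem of maximizing `J` subject to `F ≤ 0`, at the multiplier `lam`. -/
def lagrangian (J : E → ℝ) (F : E → H) (lam : H) (x : E) : ℝ :=
  -J x + ⟪lam, F x⟫

/-- The dual function of the problem of maximizing `J` over `S` subject to `F ≤ 0`. It is real
valued, with the junk value `0` when the Lagrangian is unbounded below on `S` or `S` is empty. -/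
noncomputable def dualFunction (S : Set E) (J : E → ℝ) (F : E → H) (lam : H) : ℝ :=
  sInf (lagrangian J F lam '' S)

theorem dualFunction_eq_of_isMinOn {S : Set E} {J : E → ℝ} {F : E → H} {lam : H} {x : E}
    (hx : x ∈ S) (hmin : IsMinOn (lagrangian J F lam) S x) :
    dualFunction S J F lam = lagrangian J F lam x :=
  (hmin.isGLB hx).csInf_eq ⟨_, x, hx, rfl⟩

variable [Lattice H]

/-- The augmented Lagrangian, with multiplier `lam` and penalty `ρ`, of the problem of maximizing
`J` subject to `F ≤ 0`. -/
noncomputable def augmentedLagrangian (J : E → ℝ) (F : E → H) (lam : H) (ρ : ℝ) (x : E) : ℝ :=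
  -J x + 1 / (2 * ρ) * ‖(lam + ρ • F x)⁺‖ ^ 2 - 1 / (2 * ρ) * ‖lam‖ ^ 2

variable [HasSolidNorm H] [IsOrderedAddMonoid H] [PosSMulMono ℝ H] [AddCommMonoid E] [SMul ℝ E]
  {S : Set E} {J : E → ℝ} {F : E → H} {lam : H} {ρ t : ℝ} {x y : E}

theorem norm_posPart_add_smul_segment_sq_le (hF : ConvexOn ℝ S F) (hρ : 0 ≤ ρ) (hx : x ∈ S)
    (hy : y ∈ S) (ht₀ : 0 ≤ t) (ht₁ : t ≤ 1) :
    ‖(lam + ρ • F (t • y + (1 - t) • x))⁺‖ ^ 2 ≤ ‖(lam + ρ • F x)⁺‖ ^ 2 +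
      2 * (t * ρ * ⟪(lam + ρ • F x)⁺, F y - F x⟫) + (t * ρ) ^ 2 * ‖F y - F x‖ ^ 2 := by
  have le_shift : lam + ρ • F (t • y + (1 - t) • x) ≤
      lam + ρ • F x + (t * ρ) • (F y - F x) := calc
    lam + ρ • F (t • y + (1 - t) • x) ≤ lam + ρ • (t • F y + (1 - t) • F x) := by
      gcongr
      exact hF.2 hy hx ht₀ (sub_nonneg.2 ht₁) (add_sub_cancel t 1)
    _ = lam + ρ • F x + (t * ρ) • (F y - F x) := by module
  calc ‖(lam + ρ • F (t • y + (1 - t) • x))⁺‖ ^ 2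
      ≤ ‖(lam + ρ • F x + (t * ρ) • (F y - F x))⁺‖ ^ 2 := by
        gcongr ?_ ^ 2
        exact norm_posPart_le_norm_posPart le_shift
    _ ≤ _ := norm_posPart_add_sq_le _ _
    _ = _ := by rw [inner_smul_right, norm_smul, mul_pow, Real.norm_eq_abs, sq_abs]

theorem augmentedLagrangian_segment_le (hJ : ConcaveOn ℝ S J) (hF : ConvexOn ℝ S F) (hρ : 0 < ρ)
    (hx : x ∈ S) (hy : y ∈ S) (ht₀ : 0 ≤ t) (ht₁ : t ≤ 1) :
    augmentedLagrangian J F lam ρ (t • y + (1 - t) • x) ≤ augmentedLagrangian J F lam ρ x +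
      t * (lagrangian J F (lam + ρ • F x)⁺ y - lagrangian J F (lam + ρ • F x)⁺ x +
        t * (ρ / 2 * ‖F y - F x‖ ^ 2)) := by
  have concave : t * J y + (1 - t) * J x ≤ J (t • y + (1 - t) • x) :=
    hJ.2 hy hx ht₀ (sub_nonneg.2 ht₁) (add_sub_cancel t 1)
  have penalty := mul_le_mul_of_nonneg_left
    (norm_posPart_add_smul_segment_sq_le (lam := lam) hF hρ.le hx hy ht₀ ht₁)
    (show 0 ≤ 1 / (2 * ρ) by positivity)
  have expand (n i z : ℝ) : 1 / (2 * ρ) * (n + 2 * (t * ρ * i) + (t * ρ) ^ 2 * z) =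
      1 / (2 * ρ) * n + t * i + t * (t * (ρ / 2 * z)) := by
    field_simp
  rw [expand, inner_sub_right] at penalty
  unfold augmentedLagrangian lagrangian
  linarith

theorem isMinOn_lagrangian_of_isMinOn_augmentedLagrangian (hJ : ConcaveOn ℝ S J)
    (hF : ConvexOn ℝ S F) (hρ : 0 < ρ) (hx : x ∈ S)
    (hmin : IsMinOn (augmentedLagrangian J F lam ρ) S x) :
    IsMinOn (lagrangian J F (lam + ρ • F x)⁺) S x := by
  refine isMinOn_iff.2 fun y hy ↦ sub_nonneg.1 ?_
  refine nonneg_of_forall_mem_Ioc_nonneg_add_mul (b := ρ / 2 * ‖F y - F x‖ ^ 2) fun t ht ↦ ?_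
  have segment_mem : t • y + (1 - t) • x ∈ S :=
    hF.1 hy hx ht.1.le (sub_nonneg.2 ht.2) (add_sub_cancel t 1)
  have increase := (isMinOn_iff.1 hmin _ segment_mem).trans
    (augmentedLagrangian_segment_le hJ hF hρ hx hy ht.1.le ht.2)
  exact nonneg_of_mul_nonneg_right (le_add_iff_nonneg_right _ |>.1 increase) ht.1

theorem stmt_4_general (hJ : ConcaveOn ℝ S J) (hF : ConvexOn ℝ S F) (hρ : 0 < ρ) (hx : x ∈ S)
    (hmin : IsMinOn (augmentedLagrangian J F lam ρ) S x) :
    IsMinOn (lagrangian J F (lam + ρ • F x)⁺) S x ∧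
      dualFunction S J F (lam + ρ • F x)⁺ = lagrangian J F (lam + ρ • F x)⁺ x :=
  have hmin' := isMinOn_lagrangian_of_isMinOn_augmentedLagrangian hJ hF hρ hx hmin
  ⟨hmin', dualFunction_eq_of_isMinOn hx hmin'⟩

end Lagrangian

section Convexity

variable {E β : Type*} [AddCommMonoid E] [SMul ℝ E] {S : Set E}

theorem convexOn_of_forall_one_sub [AddCommMonoid β] [PartialOrder β] [SMul ℝ β] {f : E → β}
    (hS : Convex ℝ S)
    (hf : ∀ x ∈ S, ∀ y ∈ S, ∀ t : ℝ, 0 ≤ t → t ≤ 1 →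
      f (t • x + (1 - t) • y) ≤ t • f x + (1 - t) • f y) :
    ConvexOn ℝ S f := by
  refine ⟨hS, fun x hx y hy a b ha hb hab ↦ ?_⟩
  obtain rfl := eq_sub_of_add_eq' hab
  exact hf x hx y hy a ha (sub_nonneg.1 hb)

theorem concaveOn_of_forall_one_sub [AddCommMonoid β] [PartialOrder β] [SMul ℝ β] {f : E → β}
    (hS : Convex ℝ S)
    (hf : ∀ x ∈ S, ∀ y ∈ S, ∀ t : ℝ, 0 ≤ t → t ≤ 1 →
      t • f x + (1 - t) • f y ≤ f (t • x + (1 - t) • y)) :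
    ConcaveOn ℝ S f :=
  convexOn_of_forall_one_sub (β := βᵒᵈ) hS hf

end Convexity

section Lp

open scoped ENNReal

variable {α : Type*} [MeasurableSpace α] {μ : Measure α} {p : ℝ≥0∞}

theorem Lp_posPart_eq_posPart (f : Lp ℝ p μ) : Lp.posPart f = f⁺ := by
  refine Lp.ext ?_
  filter_upwards [Lp.coeFn_posPart f, Lp.coeFn_sup f 0, Lp.coeFn_zero ℝ p μ] with a h₁ h₂ h₃
  rw [posPart_def, h₁, h₂, Pi.sup_apply, h₃, Pi.zero_apply]

variable {β : Type*} [NormedAddCommGroup β] [PartialOrder β]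

instance posSMulMono_Lp {𝕜 : Type*} [NormedRing 𝕜] [PartialOrder 𝕜] [Module 𝕜 β]
    [IsBoundedSMul 𝕜 β] [PosSMulMono 𝕜 β] : PosSMulMono 𝕜 (Lp β p μ) where
  smul_le_smul_of_nonneg_left c hc f g hfg := by
    rw [← Lp.coeFn_le] at hfg ⊢
    filter_upwards [hfg, Lp.coeFn_smul c f, Lp.coeFn_smul c g] with a hle hf hg
    rw [hf, hg]
    exact smul_le_smul_of_nonneg_left hle hc

theorem convexOn_Lp_of_forall_ae [NormedSpace ℝ β] {E : Type*} [AddCommMonoid E] [SMul ℝ E]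
    {S : Set E} {f : E → Lp β p μ} (hS : Convex ℝ S)
    (hf : ∀ x ∈ S, ∀ y ∈ S, ∀ t : ℝ, 0 ≤ t → t ≤ 1 →
      ∀ᵐ a ∂μ, f (t • x + (1 - t) • y) a ≤ t • f x a + (1 - t) • f y a) :
    ConvexOn ℝ S f := by
  refine convexOn_of_forall_one_sub hS fun x hx y hy t ht₀ ht₁ ↦ (Lp.coeFn_le _ _).1 ?_
  filter_upwards [hf x hx y hy t ht₀ ht₁, Lp.coeFn_add (t • f x) ((1 - t) • f y),
    Lp.coeFn_smul t (f x), Lp.coeFn_smul (1 - t) (f y)] with a hle h_add hx_smul hy_smul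
  rwa [h_add, Pi.add_apply, hx_smul, hy_smul]

end Lp

/-- under Assumptions 1–3, if `π'` minimizes the augmented Lagrangian
`π ↦ -J(π) + (1/(2ρ))‖max{0, λ + ρF(π)}‖² - (1/(2ρ))‖λ‖²` over `Π` for some `λ ∈ H₊` and
`ρ > 0`, and `λ' = max{0, λ + ρF(π')}` (pointwise positive part), then `π'` also
minimizes the standard Lagrangian `π ↦ -J(π) + ⟪λ', F(π)⟫` over `Π`; consequently
`d(λ') = -J(π') + ⟪λ', F(π')⟫`. -/
theorem stmt_4 {α : Type*} [MeasurableSpace α] {μ : Measure α}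
    {E : Type*} [NormedAddCommGroup E] [InnerProductSpace ℝ E] [CompleteSpace E]
    (Pi : Set E) (J : E → ℝ) (F : E → Lp ℝ 2 μ)
    -- Assumption 1 (boundedness)
    (MJ MF : ℝ) (hMJ : ∀ π ∈ Pi, |J π| ≤ MJ) (hMF : ∀ π ∈ Pi, ‖F π‖ ≤ MF)
    -- Assumption 2 (strong continuity along weakly convergent sequences)
    (hcont : ∀ (πseq : ℕ → E) (π : E), (∀ n, πseq n ∈ Pi) → π ∈ Pi →
      (∀ z : E, Tendsto (fun n => ⟪πseq n, z⟫) atTop (nhds ⟪π, z⟫)) →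
      Tendsto (fun n => J (πseq n)) atTop (nhds (J π)) ∧
        Tendsto (fun n => ‖F (πseq n) - F π‖) atTop (nhds 0))
    -- Assumption 3 (convexity)
    (hPiconv : Convex ℝ Pi)
    (hJconc : ∀ π₁ ∈ Pi, ∀ π₂ ∈ Pi, ∀ t : ℝ, 0 ≤ t → t ≤ 1 →
      t * J π₁ + (1 - t) * J π₂ ≤ J (t • π₁ + (1 - t) • π₂))
    (hFconv : ∀ π₁ ∈ Pi, ∀ π₂ ∈ Pi, ∀ t : ℝ, 0 ≤ t → t ≤ 1 →
      ∀ᵐ x ∂μ, F (t • π₁ + (1 - t) • π₂) x ≤ t * F π₁ x + (1 - t) * F π₂ x)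
    -- dual function
    (d : Lp ℝ 2 μ → ℝ)
    (hd : ∀ lam : Lp ℝ 2 μ, d lam = sInf ((fun π => -J π + ⟪lam, F π⟫) '' Pi))
    -- data of the statement
    (lam : Lp ℝ 2 μ) (hlam : 0 ≤ᵐ[μ] ⇑lam) (ρ : ℝ) (hρ : 0 < ρ)
    (pi' : E) (hpi'Pi : pi' ∈ Pi)
    (hmin : ∀ π ∈ Pi,
      -J pi' + 1 / (2 * ρ) * ‖Lp.posPart (lam + ρ • F pi')‖ ^ 2 - 1 / (2 * ρ) * ‖lam‖ ^ 2
        ≤ -J π + 1 / (2 * ρ) * ‖Lp.posPart (lam + ρ • F π)‖ ^ 2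
          - 1 / (2 * ρ) * ‖lam‖ ^ 2)
    (lam' : Lp ℝ 2 μ) (hlam' : lam' = Lp.posPart (lam + ρ • F pi')) :
    (∀ π ∈ Pi, -J pi' + ⟪lam', F pi'⟫ ≤ -J π + ⟪lam', F π⟫) ∧
    d lam' = -J pi' + ⟪lam', F pi'⟫ := by
  subst hlam'
  simp only [hd, Lp_posPart_eq_posPart] at hmin ⊢
  exact stmt_4_general (concaveOn_of_forall_one_sub hPiconv hJconc)
    (convexOn_Lp_of_forall_ae hPiconv hFconv) hρ hpi'Pi hmin
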